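/- arXiv:1710.08754 — 6 statements merged into one kernel-verified Lean document; each statement's English description precedes it below -/
import Mathlib

section
/- Let P be a finite partially ordered set with n elements such that for every a ∈ P the set {b ∈ P : a < b} of elements strictly above a is a chain (totally ordered); equivalently, the Hasse diagram of P is a forest in which every connected component has a greatest element. For a ∈ P set c(a) = |{b ∈ P : b ≤ a}|. Then the number of "good labellings" of P, i.e. bijections ℓ : P → {1, …, n} such that a ≤ b implies ℓ(a) ≤ ℓ(b), equals n! / ∏_{a ∈ P} c(a). -/
open Classical in
noncomputable def glEquiv {P : Type*} {n : ℕ} (m : P) :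
    {ℓ : P ≃ Fin (n+1) // ℓ m = Fin.last n} ≃ ({a : P // a ≠ m} ≃ Fin n) where
  toFun ℓ :=
    { toFun := fun a => (ℓ.1 a.1).castPred (fun h => a.2 (ℓ.1.injective (h.trans ℓ.2.symm)))
      invFun := fun i => ⟨ℓ.1.symm i.castSucc, fun h => by
        exact absurd (((Equiv.symm_apply_eq ℓ.1).1 h).trans ℓ.2) (Fin.castSucc_lt_last i).ne⟩
      left_inv := fun a => by simp
      right_inv := fun i => by simp }
  invFun e := ⟨
    { toFun := fun a => if h : a = m then Fin.last n else (e ⟨a, h⟩).castSucc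
      invFun := fun i => if h : i = Fin.last n then m else (e.symm (i.castPred h)).1
      left_inv := fun a => by
        by_cases h : a = m
        · simp [h]
        · simp [h]
      right_inv := fun i => by
        by_cases h : i = Fin.last n
        · simp [h]
        · have := (e.symm (i.castPred h)).2
          simp [h, this] }, by simp⟩
  left_inv ℓ := by
    ext a
    by_cases h : a = m
    · subst h; simp [ℓ.2]
    · simp [h]
  right_inv e := by
    ext a
    have := a.2
    simp [this]

theorem glEquiv_spec {P : Type*} {n : ℕ} (m : P) (ℓ : {ℓ : P ≃ Fin (n+1) // ℓ m = Fin.last n})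
    (a : {a : P // a ≠ m}) : (glEquiv m ℓ a).castSucc = ℓ.1 a.1 := by
  simp [glEquiv]

theorem gl_fiber {P : Type*} [PartialOrder P] {n : ℕ} (m : P) (hm : IsMax m) :
    Nat.card {ℓ : P ≃ Fin (n+1) // (∀ a b : P, a ≤ b → ℓ a ≤ ℓ b) ∧ ℓ m = Fin.last n} =
    Nat.card {ℓ : {a : P // a ≠ m} ≃ Fin n // ∀ a b : {a : P // a ≠ m}, a ≤ b → ℓ a ≤ ℓ b} := by
  have e1 : {ℓ : P ≃ Fin (n+1) // (∀ a b : P, a ≤ b → ℓ a ≤ ℓ b) ∧ ℓ m = Fin.last n} ≃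
    {ℓ : {ℓ : P ≃ Fin (n+1) // ℓ m = Fin.last n} // ∀ a b : P, a ≤ b → ℓ.1 a ≤ ℓ.1 b} :=
    (Equiv.subtypeEquivRight (fun ℓ => and_comm)).trans
      (Equiv.subtypeSubtypeEquivSubtypeInter (fun ℓ : P ≃ Fin (n+1) => ℓ m = Fin.last n)
        (fun ℓ => ∀ a b : P, a ≤ b → ℓ a ≤ ℓ b)).symm
  refine Nat.card_congr (e1.trans ((glEquiv m).subtypeEquiv ?_))
  intro ℓ
  constructor
  · intro h a b hab
    rw [← Fin.castSucc_le_castSucc_iff, glEquiv_spec, glEquiv_spec]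
    exact h _ _ hab
  · intro h a b hab
    by_cases hb : b = m
    · rw [hb, ℓ.2]; exact Fin.le_last _
    · by_cases ha : a = m
      · subst ha
        exact absurd (hm.eq_of_le hab).symm hb
      · have := h ⟨a, ha⟩ ⟨b, hb⟩ hab
        rwa [← Fin.castSucc_le_castSucc_iff, glEquiv_spec, glEquiv_spec] at this

open Classical in
theorem gl_count {P : Type*} [Fintype P] [PartialOrder P]
    (hchain : ∀ a : P, IsChain (· ≤ ·) {b : P | a < b}) :
    ∑ m : P, (if IsMax m then Nat.card {b : P // b ≤ m} else 0) = Fintype.card P := by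
  have h1 : ∀ m : P, (if IsMax m then Nat.card {b : P // b ≤ m} else 0)
      = ∑ b : P, if b ≤ m ∧ IsMax m then 1 else 0 := by
    intro m
    split_ifs with h
    · simp [h, Fintype.card_subtype]
    · simp [h]
  simp_rw [h1]
  rw [Finset.sum_comm]
  have h2 : ∀ b : P, (∑ m : P, if b ≤ m ∧ IsMax m then 1 else 0) = 1 := by
    intro b
    obtain ⟨m, hbm, hm⟩ := (Set.toFinite (Set.univ : Set P)).exists_le_maximal (Set.mem_univ b)
    have hm' : IsMax m := by simpa using hm
    rw [Finset.sum_eq_single m]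
    · simp [hbm, hm']
    · intro k _ hk
      rw [if_neg]
      rintro ⟨hbk, hkm⟩
      apply hk
      rcases hbk.eq_or_lt with rfl | h3
      · exact hkm.eq_of_le hbm
      rcases hbm.eq_or_lt with rfl | h4
      · exact (hm'.eq_of_le hbk).symm
      rcases hchain b h3 h4 hk with h | h
      · exact hkm.eq_of_le h
      · exact (hm'.eq_of_le h).symm
    · simp
  simp [h2]

open Classical in
theorem gl_main (n : ℕ) : ∀ {P : Type*} [Fintype P] [PartialOrder P]
    (_ : ∀ a : P, IsChain (· ≤ ·) {b : P | a < b}), Fintype.card P = n →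
    Nat.card {ℓ : P ≃ Fin n // ∀ a b : P, a ≤ b → ℓ a ≤ ℓ b}
      * ∏ a : P, Nat.card {b : P // b ≤ a} = Nat.factorial n := by
  induction n with
  | zero =>
    intro P _ _ _ hc
    have : IsEmpty P := Fintype.card_eq_zero_iff.mp hc
    have : Unique {ℓ : P ≃ Fin 0 // ∀ a b : P, a ≤ b → ℓ a ≤ ℓ b} :=
      { default := ⟨Equiv.equivOfIsEmpty _ _, fun a => isEmptyElim a⟩
        uniq := fun x => Subtype.ext (Equiv.ext fun a => isEmptyElim a) }
    rw [Nat.card_unique]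
    simp
  | succ n ih =>
    intro P _ _ hchain hc
    have hs : Nat.card {ℓ : P ≃ Fin (n+1) // ∀ a b : P, a ≤ b → ℓ a ≤ ℓ b} =
        ∑ m : P, Nat.card {ℓ : P ≃ Fin (n+1) // (∀ a b : P, a ≤ b → ℓ a ≤ ℓ b) ∧
          ℓ m = Fin.last n} := by
      rw [← Nat.card_sigma]
      refine Nat.card_congr ⟨fun ℓ => ⟨ℓ.1.symm (Fin.last n), ℓ.1, ℓ.2, by simp⟩,
        fun x => ⟨x.2.1, x.2.2.1⟩, fun ℓ => rfl, ?_⟩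
      rintro ⟨m, ℓ, h1, h2⟩
      have : m = ℓ.symm (Fin.last n) := by rw [← h2]; simp
      subst this
      rfl
    rw [hs, Finset.sum_mul]
    have key : ∀ m : P, Nat.card {ℓ : P ≃ Fin (n+1) // (∀ a b : P, a ≤ b → ℓ a ≤ ℓ b) ∧
          ℓ m = Fin.last n} * ∏ a : P, Nat.card {b : P // b ≤ a}
        = n.factorial * (if IsMax m then Nat.card {b : P // b ≤ m} else 0) := by
      intro m
      split_ifs with hm
      · rw [gl_fiber m hm, ← ih (P := {a : P // a ≠ m}) ?_ ?_, mul_assoc]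
        · congr 1
          rw [Fintype.prod_eq_mul_prod_compl m, mul_comm]
          congr 1
          rw [Finset.prod_subtype (p := fun a => a ≠ m) ({m}ᶜ) (by simp)
            (fun a => Nat.card {b : P // b ≤ a})]
          refine Finset.prod_congr rfl fun a _ => ?_
          refine Nat.card_congr ⟨fun b => ⟨⟨b.1, ?_⟩, b.2⟩, fun b => ⟨b.1.1, b.2⟩,
            fun _ => rfl, fun _ => rfl⟩
          rintro h
          have h5 := b.2
          rw [h] at h5
          exact a.2 (hm.eq_of_le h5).symm
        · intro a b hb c hc hne
          exact hchain a.1 (show a.1 < b.1 from hb) (show a.1 < c.1 from hc)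
            (fun h => hne (Subtype.ext h))
        · simp [Fintype.card_subtype_compl, hc]
      · rw [mul_zero, mul_eq_zero]
        left
        rw [Nat.card_eq_zero]
        left
        constructor
        rintro ⟨ℓ, h1, h2⟩
        apply hm
        intro b hb
        have h3 := h1 _ _ hb
        rw [h2] at h3
        have h4 : ℓ b = ℓ m := by rw [h2]; exact le_antisymm (Fin.le_last _) h3
        exact (ℓ.injective h4).le
    simp_rw [key]
    rw [← Finset.mul_sum, gl_count hchain, hc, Nat.factorial_succ, mul_comm]


/-- **Number of good labellings of a forest-like poset.**
Let `P` be a finite poset in which, for every `a`, the set of elements strictly above `a`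
is a chain (equivalently, the Hasse diagram is a forest each of whose components has a
greatest element).  For `a ∈ P` let `c a` be the number of elements `≤ a`.  Then the number
of order-preserving bijections `ℓ : P ≃ Fin n` (with `n = |P|`) is `n! / ∏ a, c a`. -/
theorem number_of_good_labellings {P : Type*} [Fintype P] [PartialOrder P]
    (hchain : ∀ a : P, IsChain (· ≤ ·) {b : P | a < b}) :
    Nat.card {ℓ : P ≃ Fin (Fintype.card P) // ∀ a b : P, a ≤ b → ℓ a ≤ ℓ b}
      = Nat.factorial (Fintype.card P) / ∏ a : P, Nat.card {b : P // b ≤ a} := by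

  rw [← gl_main _ hchain rfl, Nat.mul_div_cancel]
  refine Finset.prod_pos fun a _ => ?_
  have : Nonempty {b : P // b ≤ a} := ⟨⟨a, le_rfl⟩⟩
  exact Nat.card_pos
end

section
/- Let x ∈ S′_{m,n} be nilpotent. Then there exists a unique (m+2n)-dimensional subspace L ⊆ V such that z(L) ⊆ L, the restriction of P to L is injective with P(L) = W, and P(z(v)) = x(P(v)) for every v ∈ L (i.e. P ∘ z ∘ (P|_L)^{-1} = x as an endomorphism of W). -/
open scoped BigOperators

/-- The coordinate shift: `(shiftMap v) i = v (i+1)`, with the last coordinate sent to `0`. -/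
def shiftMap (k : Type*) [Field k] (N : ℕ) : (Fin N → k) →ₗ[k] (Fin N → k) where
  toFun v i := if h : (i : ℕ) + 1 < N then v ⟨(i : ℕ) + 1, h⟩ else 0
  map_add' u v := by funext i; split <;> rename_i h <;> simp [h]
  map_smul' c v := by funext i; split <;> rename_i h <;> simp [h]

/-- The ambient `2(m+2n)`-dimensional space `V`: the first factor holds the coordinates in the
basis `e₁, …, e_{m+2n}`, the second factor those in `f₁, …, f_{m+2n}` (0-indexed). -/
abbrev VV (k : Type*) [Field k] (m n : ℕ) := (Fin (m + 2*n) → k) × (Fin (m + 2*n) → k)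

/-- The nilpotent `z : V → V`, `z eᵢ = eᵢ₋₁`, `z fᵢ = fᵢ₋₁` (with `e₀ = f₀ = 0`). -/
def zmap (k : Type*) [Field k] (m n : ℕ) : VV k m n →ₗ[k] VV k m n :=
  (shiftMap k (m + 2*n)).prodMap (shiftMap k (m + 2*n))

/-- The space `W = span(e₁, …, e_{m+n}, f₁, …, f_n)`, with coordinates indexed by
`Fin (m+2n)`: index `u < m+n` corresponds to `e_{u+1}`, index `u ≥ m+n` to `f_{u-(m+n)+1}`. -/
abbrev Wt (k : Type*) [Field k] (m n : ℕ) := Fin (m + 2*n) → k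

/-- The projection `P : V → W` with `P eᵢ = eᵢ` for `i ≤ m+n`, `P eᵢ = 0` otherwise,
`P fⱼ = fⱼ` for `j ≤ n`, `P fⱼ = 0` otherwise. -/
def Pmap (k : Type*) [Field k] (m n : ℕ) : VV k m n →ₗ[k] Wt k m n where
  toFun v i :=
    if (i : ℕ) < m + n then v.1 i else v.2 ⟨(i : ℕ) - (m + n), by have := i.isLt; omega⟩
  map_add' u v := by funext i; split <;> rename_i h <;> simp [h]
  map_smul' c v := by funext i; split <;> rename_i h <;> simp [h]

/-- Membership in the slice `S′_{m,n}`: viewing `x` as a matrix in the ordered basis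
`e₁, …, e_{m+n}, f₁, …, f_n` of `W`, there are scalars `a, c` (indexed by the `e`-columns)
and `b, d` (indexed by the `f`-columns) with
`x eᵢ = eᵢ₋₁ + aᵢ e_{m+n} + cᵢ f_n` (for `1 ≤ i ≤ m+n`) and
`x fⱼ = fⱼ₋₁ + bⱼ e_{m+n} + dⱼ f_n` (for `1 ≤ j ≤ n`), with `e₀ = f₀ = 0`. -/
def MemS' {k : Type*} [Field k] {m n : ℕ} (hn : 1 ≤ n)
    (x : Matrix (Fin (m + 2*n)) (Fin (m + 2*n)) k) : Prop :=
  ∃ (a c : Fin (m + n) → k) (b d : Fin n → k),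
    ∀ v : Fin (m + 2*n),
      x.mulVec (Pi.single v 1) =
        (if 1 ≤ (v : ℕ) ∧ (v : ℕ) ≠ m + n then
          (Pi.single (⟨(v : ℕ) - 1, by have := v.isLt; omega⟩ : Fin (m + 2*n)) 1 : Wt k m n)
         else 0)
        + (if h : (v : ℕ) < m + n then a ⟨(v : ℕ), h⟩
            else b ⟨(v : ℕ) - (m + n), by have := v.isLt; omega⟩) •
            (Pi.single (⟨m + n - 1, by omega⟩ : Fin (m + 2*n)) 1 : Wt k m n)
        + (if h : (v : ℕ) < m + n then c ⟨(v : ℕ), h⟩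
            else d ⟨(v : ℕ) - (m + n), by have := v.isLt; omega⟩) •
            (Pi.single (⟨m + 2*n - 1, by omega⟩ : Fin (m + 2*n)) 1 : Wt k m n)

theorem pow_card_eq_zero_aux {k : Type*} [Field k] {N : ℕ} (x : Matrix (Fin N) (Fin N) k)
    (h : IsNilpotent x) : x ^ N = 0 := by
  have h1 := (Matrix.isNilpotent_charpoly_sub_pow_of_isNilpotent h).eq_zero
  have h2 := x.aeval_self_charpoly
  rw [sub_eq_zero.mp h1] at h2
  simpa using h2

theorem row_aux {k : Type*} [Field k] {m n : ℕ} (hn : 1 ≤ n)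
    (x : Matrix (Fin (m + 2*n)) (Fin (m + 2*n)) k) (hx : MemS' hn x)
    (w : Fin (m + 2*n) → k) (u : ℕ) (hu : u + 1 < m + 2*n) (hu' : u + 1 ≠ m + n) :
    x.mulVec w ⟨u, by omega⟩ = w ⟨u + 1, hu⟩ := by
  obtain ⟨a, c, b, d, h⟩ := hx
  have key : ∀ v, x ⟨u, by omega⟩ v = if v = ⟨u + 1, hu⟩ then 1 else 0 := by
    intro v
    have hv := congrFun (h v) ⟨u, by omega⟩
    rw [Matrix.mulVec_single_one] at hv
    have e1 : (⟨u, by omega⟩ : Fin (m + 2*n)) ≠ ⟨m + n - 1, by omega⟩ := by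
      intro e; rw [Fin.mk.injEq] at e; omega
    have e2 : (⟨u, by omega⟩ : Fin (m + 2*n)) ≠ ⟨m + 2*n - 1, by omega⟩ := by
      intro e; rw [Fin.mk.injEq] at e; omega
    simp only [Matrix.col_apply, Pi.add_apply, Pi.smul_apply, Pi.single_eq_of_ne e1,
      Pi.single_eq_of_ne e2, smul_zero, add_zero] at hv
    rw [hv]
    obtain ⟨v, hvl⟩ := v
    by_cases hc : v = u + 1
    · subst hc
      simp [hu']
    · have hne : (⟨v, hvl⟩ : Fin (m + 2*n)) ≠ ⟨u + 1, hu⟩ := by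
        rw [Ne, Fin.mk.injEq]; exact hc
      rw [if_neg hne]
      split_ifs with h3
      · apply Pi.single_eq_of_ne
        intro e; rw [Fin.mk.injEq] at e
        have e' : u = v - 1 := e
        have h3' : 1 ≤ v := h3.1
        exact hc (by omega)
      · rfl
  simp [Matrix.mulVec, dotProduct, key]

theorem coord_aux {k : Type*} [Field k] {m n : ℕ} (hn : 1 ≤ n)
    (x : Matrix (Fin (m + 2*n)) (Fin (m + 2*n)) k) (hx : MemS' hn x) (s t : ℕ)
    (hst : s + t < m + 2*n) (hs : s + t < m + n ∨ m + n ≤ s) (w : Fin (m + 2*n) → k) :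
    (x ^ t).mulVec w ⟨s, by omega⟩ = w ⟨s + t, hst⟩ := by
  induction t generalizing w with
  | zero => simp
  | succ t ih =>
    rw [pow_succ, ← Matrix.mulVec_mulVec, ih (by omega) (by omega),
      row_aux hn x hx w (s + t) (by omega) (by omega)]
    rfl

/-- The explicit lift of `W` into `V`. -/
def liftAux {k : Type*} [Field k] {m n : ℕ} (hn : 1 ≤ n)
    (x : Matrix (Fin (m + 2*n)) (Fin (m + 2*n)) k) : Wt k m n →ₗ[k] VV k m n where
  toFun w := (fun i => (x ^ (i : ℕ)).mulVec w ⟨0, by omega⟩,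
    fun i => (x ^ (i : ℕ)).mulVec w ⟨m + n, by omega⟩)
  map_add' u v := by ext i <;> simp [Matrix.mulVec_add]
  map_smul' c v := by ext i <;> simp [Matrix.mulVec_smul]

theorem P_lift {k : Type*} [Field k] {m n : ℕ} (hn : 1 ≤ n)
    (x : Matrix (Fin (m + 2*n)) (Fin (m + 2*n)) k) (hx : MemS' hn x) (w : Wt k m n) :
    Pmap k m n (liftAux hn x w) = w := by
  funext i
  obtain ⟨i, hi⟩ := i
  simp only [Pmap, liftAux, LinearMap.coe_mk, AddHom.coe_mk]
  split_ifs with h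
  · rw [coord_aux hn x hx 0 i (by omega) (by omega)]
    simp
  · rw [coord_aux hn x hx (m + n) (i - (m + n)) (by omega) (by omega)]
    congr 2
    omega

theorem z_lift {k : Type*} [Field k] {m n : ℕ} (hn : 1 ≤ n)
    (x : Matrix (Fin (m + 2*n)) (Fin (m + 2*n)) k) (hnil : IsNilpotent x) (w : Wt k m n) :
    zmap k m n (liftAux hn x w) = liftAux hn x (x.mulVec w) := by
  have h0 := pow_card_eq_zero_aux x hnil
  have key : ∀ i : Fin (m + 2*n), ¬ ((i : ℕ) + 1 < m + 2*n) → x ^ ((i : ℕ) + 1) = 0 := by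
    intro i hi
    rw [show (i : ℕ) + 1 = m + 2*n by omega, h0]
  refine Prod.ext (funext fun i => ?_) (funext fun i => ?_)
  all_goals
    simp only [zmap, shiftMap, liftAux, LinearMap.prodMap_apply, LinearMap.coe_mk, AddHom.coe_mk,
      Matrix.mulVec_mulVec, ← pow_succ]
    split_ifs with h
    · rfl
    · rw [key i h]; simp

theorem lift_P {k : Type*} [Field k] {m n : ℕ} (hn : 1 ≤ n)
    (x : Matrix (Fin (m + 2*n)) (Fin (m + 2*n)) k) (L : Submodule k (VV k m n))
    (hz : ∀ v ∈ L, zmap k m n v ∈ L)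
    (hP : ∀ v ∈ L, Pmap k m n (zmap k m n v) = x.mulVec (Pmap k m n v))
    (v : VV k m n) (hv : v ∈ L) : liftAux hn x (Pmap k m n v) = v := by
  have key : ∀ (i : ℕ) (hi : i < m + 2*n) (v : VV k m n), v ∈ L →
      (x ^ i).mulVec (Pmap k m n v) ⟨0, by omega⟩ = v.1 ⟨i, hi⟩ ∧
      (x ^ i).mulVec (Pmap k m n v) ⟨m + n, by omega⟩ = v.2 ⟨i, hi⟩ := by
    intro i
    induction i with
    | zero =>
      intro hi v hv
      have : 0 < m + n := by omega
      constructor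
      · simp only [pow_zero, Matrix.one_mulVec, Pmap, LinearMap.coe_mk, AddHom.coe_mk]
        rw [if_pos this]
      · simp [Pmap]
    | succ i ih =>
      intro hi v hv
      rw [pow_succ, ← Matrix.mulVec_mulVec, ← hP v hv]
      have := ih (by omega) _ (hz v hv)
      rw [this.1, this.2]
      simp [zmap, shiftMap, hi]
  refine Prod.ext (funext fun i => ?_) (funext fun i => ?_)
  · exact (key i i.2 v hv).1
  · exact (key i i.2 v hv).2

/-- **Existence and uniqueness of the `z`-stable lift `L` of `W` realizing a given nilpotent
`x ∈ S′_{m,n}`** (Lemma `lin` of Nandakumar–Yang): for `x ∈ S′_{m,n}` nilpotent there is a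
unique `(m+2n)`-dimensional subspace `L ⊆ V` with `z(L) ⊆ L`, `P|_L` injective with
`P(L) = W`, and `P ∘ z = x ∘ P` on `L`. -/
theorem unique_z_stable_lift {k : Type*} [Field k] (m n : ℕ) (hn : 1 ≤ n)
    (x : Matrix (Fin (m + 2*n)) (Fin (m + 2*n)) k)
    (hx : MemS' hn x) (hnil : IsNilpotent x) :
    ∃! L : Submodule k (VV k m n),
      Module.finrank k L = m + 2*n ∧
      (∀ v ∈ L, zmap k m n v ∈ L) ∧
      (∀ v ∈ L, Pmap k m n v = 0 → v = 0) ∧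
      Submodule.map (Pmap k m n) L = ⊤ ∧
      ∀ v ∈ L, Pmap k m n (zmap k m n v) = x.mulVec (Pmap k m n v) := by
  refine ⟨LinearMap.range (liftAux hn x), ⟨?_, ?_, ?_, ?_, ?_⟩, ?_⟩
  · rw [LinearMap.finrank_range_of_inj]
    · simp
    · exact Function.LeftInverse.injective (P_lift hn x hx)
  · rintro _ ⟨w, rfl⟩
    exact ⟨x.mulVec w, (z_lift hn x hnil w).symm⟩
  · rintro _ ⟨w, rfl⟩ h
    rw [P_lift hn x hx] at h
    rw [h, map_zero]
  · rw [eq_top_iff]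
    intro w _
    exact ⟨liftAux hn x w, ⟨w, rfl⟩, P_lift hn x hx w⟩
  · rintro _ ⟨w, rfl⟩
    rw [z_lift hn x hnil, P_lift hn x hx, P_lift hn x hx]
  · rintro L ⟨_, hz, _, htop, hP⟩
    apply le_antisymm
    · intro v hv
      exact ⟨_, lift_P hn x L hz hP v hv⟩
    · rintro _ ⟨w, rfl⟩
      have hw : w ∈ Submodule.map (Pmap k m n) L := by rw [htop]; trivial
      obtain ⟨v, hv, rfl⟩ := hw
      rw [lift_P hn x L hz hP v hv]
      exact hv
end

section
/- Let x ∈ S′_{m,n} be nilpotent, regarded as an (m+2n)×(m+2n) matrix via the ordered basis e_1, …, e_{m+n}, f_1, …, f_n of W (so f_j has index m+n+j). Define, for 1 ≤ i ≤ m+n and 1 ≤ j ≤ n, the vectors ẽ_i = e_i + Σ_{k=1}^{n} (x^k)_{m+n, i} e_{m+n+k} + Σ_{l=1}^{m+n} (x^l)_{m+2n, i} f_{n+l} and f̃_j = f_j + Σ_{k=1}^{n} (x^k)_{m+n, m+n+j} e_{m+n+k} + Σ_{l=1}^{m+n} (x^l)_{m+2n, m+n+j} f_{n+l} in V. Then the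 subspace L spanned by ẽ_1, …, ẽ_{m+n}, f̃_1, …, f̃_n satisfies: z(L) ⊆ L, the restriction of P to L is an isomorphism onto W, and P(z(v)) = x(P(v)) for every v ∈ L. -/
open scoped BigOperators

/-- The inclusion `ι : W → V` (a section of `P`): basis index `u < m+n` is sent to `e_{u+1}`,
and `u ≥ m+n` to `f_{u-(m+n)+1}`. -/
def iota (k : Type*) [Field k] (m n : ℕ) : Wt k m n →ₗ[k] VV k m n where
  toFun w :=
    (fun i => if (i : ℕ) < m + n then w i else 0,
     fun j => if h : (j : ℕ) + (m + n) < m + 2*n then w ⟨(j : ℕ) + (m + n), h⟩ else 0)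
  map_add' u v := by
    refine Prod.ext ?_ ?_ <;> funext i <;> dsimp only <;> split <;> rename_i h <;> simp [h]
  map_smul' c v := by
    refine Prod.ext ?_ ?_ <;> funext i <;> dsimp only <;> split <;> rename_i h <;> simp [h]

theorem aux_pow_zero {k : Type*} [Field k] {N : ℕ} (x : Matrix (Fin N) (Fin N) k)
    (hnil : IsNilpotent x) : x ^ N = 0 := by
  have h1 : x.charpoly = Polynomial.X ^ N := by
    have := Matrix.isNilpotent_charpoly_sub_pow_of_isNilpotent hnil
    have h2 := this.eq_zero
    rw [sub_eq_zero] at h2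
    simpa using h2
  have := Matrix.aeval_self_charpoly x
  rw [h1] at this
  simpa using this

theorem aux_row {k : Type*} [Field k] {m n : ℕ} (hn : 1 ≤ n)
    (x : Matrix (Fin (m + 2*n)) (Fin (m + 2*n)) k) (hx : MemS' hn x)
    (w : Fin (m + 2*n) → k) (p q : Fin (m + 2*n)) (hpq : (q : ℕ) = p + 1)
    (hq : (q : ℕ) ≠ m + n) : x.mulVec w p = w q := by
  obtain ⟨a, c, b, d, h⟩ := hx
  have hrow : ∀ v, x p v = if v = q then 1 else 0 := by
    intro v
    have h1 := congrFun (h v) p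
    rw [Matrix.mulVec_single_one] at h1
    have hq' := q.isLt
    have hv' := v.isLt
    have e1 : p ≠ ⟨m + n - 1, by omega⟩ := by
      intro hh; have := congrArg Fin.val hh; simp at this; omega
    have e2 : p ≠ ⟨m + 2*n - 1, by omega⟩ := by
      intro hh; have := congrArg Fin.val hh; simp at this; omega
    simp only [Matrix.col_apply, Pi.add_apply, Pi.smul_apply, Pi.single_eq_of_ne e1,
      Pi.single_eq_of_ne e2, smul_zero, add_zero] at h1
    rw [h1]
    by_cases hvq : v = q
    · subst hvq
      rw [if_pos ⟨by omega, hq⟩, if_pos rfl]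
      have : p = ⟨(v : ℕ) - 1, by omega⟩ := by ext; simp; omega
      rw [← this]; simp
    · rw [if_neg hvq]
      split_ifs with h3
      · apply Pi.single_eq_of_ne
        intro hh; have := congrArg Fin.val hh; simp at this
        apply hvq; ext; omega
      · rfl
  simp [Matrix.mulVec, dotProduct, hrow]

theorem aux_iter {k : Type*} [Field k] {m n : ℕ} (hn : 1 ≤ n)
    (x : Matrix (Fin (m + 2*n)) (Fin (m + 2*n)) k) (hx : MemS' hn x) (j : ℕ) :
    ∀ (w : Fin (m + 2*n) → k) (p q : Fin (m + 2*n)), (q : ℕ) = p + j →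
    ((q : ℕ) < m + n ∨ m + n ≤ (p : ℕ)) → (x ^ j).mulVec w p = w q := by
  induction j with
  | zero =>
    intro w p q h _
    have : q = p := by ext; omega
    simp [this]
  | succ j ih =>
    intro w p q h h2
    have hq := q.isLt
    rw [pow_succ, ← Matrix.mulVec_mulVec, ih _ p ⟨p + j, by omega⟩ rfl (by simp; omega)]
    exact aux_row hn x hx w _ q (by simp; omega) (by omega)

theorem aux_coord {k : Type*} [Field k] (m n : ℕ)
    (x : Matrix (Fin (m + 2*n)) (Fin (m + 2*n)) k)
    (tilde : Fin (m + 2*n) → VV k m n) (r s : Fin (m + 2*n))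
    (α : Fin n → Fin (m + 2*n)) (hα : ∀ kk, (α kk : ℕ) = m + n + kk)
    (β : Fin (m + n) → Fin (m + 2*n)) (hβ : ∀ ll, (β ll : ℕ) = n + ll)
    (htilde : ∀ i : Fin (m + 2*n),
      tilde i = iota k m n (Pi.single i 1)
        + ∑ kk : Fin n, (x ^ ((kk : ℕ) + 1)) r i • ((Pi.single (α kk) 1, 0) : VV k m n)
        + ∑ ll : Fin (m + n), (x ^ ((ll : ℕ) + 1)) s i • ((0, Pi.single (β ll) 1) : VV k m n))
    (i p : Fin (m + 2*n)) :
    (tilde i).1 p = (if (p : ℕ) < m + n then (Pi.single i 1 : Fin (m + 2*n) → k) p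
      else (x ^ ((p : ℕ) - (m + n) + 1)) r i) ∧
    (tilde i).2 p = (if h : (p : ℕ) < n then
        (Pi.single i 1 : Fin (m + 2*n) → k) ⟨(p : ℕ) + (m + n), by omega⟩
      else (x ^ ((p : ℕ) - n + 1)) s i) := by
  have hp := p.isLt
  rw [htilde i]
  constructor
  · simp only [iota, Prod.fst_add, Prod.fst_sum, Prod.smul_fst, Pi.add_apply, Finset.sum_apply,
      Pi.smul_apply, smul_zero, Finset.sum_const_zero, Pi.zero_apply, add_zero,
      LinearMap.coe_mk, AddHom.coe_mk, smul_eq_mul]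
    split_ifs with h
    · rw [Finset.sum_eq_zero, add_zero]
      intro kk _
      rw [Pi.single_eq_of_ne, mul_zero]
      intro hh; have := congrArg Fin.val hh; rw [hα] at this; omega
    · rw [zero_add, Finset.sum_eq_single (⟨p - (m + n), by omega⟩ : Fin n)]
      · have : p = α ⟨(p : ℕ) - (m + n), by omega⟩ := by ext; rw [hα]; dsimp only; omega
        rw [← this]; simp
      · intro kk _ hk
        rw [Pi.single_eq_of_ne, mul_zero]
        intro hh; have := congrArg Fin.val hh; rw [hα] at this
        apply hk; ext; dsimp only; omega
      · simp
  · simp only [iota, Prod.snd_add, Prod.snd_sum, Prod.smul_snd, Pi.add_apply, Finset.sum_apply,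
      Pi.smul_apply, smul_zero, Finset.sum_const_zero, Pi.zero_apply, add_zero,
      LinearMap.coe_mk, AddHom.coe_mk, smul_eq_mul]
    by_cases h : (p : ℕ) < n
    · rw [dif_pos h, dif_pos (by omega), Finset.sum_eq_zero, add_zero]
      intro kk _
      rw [Pi.single_eq_of_ne, mul_zero]
      intro hh; have := congrArg Fin.val hh; rw [hβ] at this; omega
    · rw [dif_neg h, dif_neg (by omega), zero_add,
        Finset.sum_eq_single (⟨p - n, by omega⟩ : Fin (m + n))]
      · have : p = β ⟨(p : ℕ) - n, by omega⟩ := by ext; rw [hβ]; dsimp only; omega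
        rw [← this]; simp
      · intro kk _ hk
        rw [Pi.single_eq_of_ne, mul_zero]
        intro hh; have := congrArg Fin.val hh; rw [hβ] at this
        apply hk; ext; dsimp only; omega
      · simp

/-- **The explicit lift `L` of `W` attached to a nilpotent `x ∈ S′_{m,n}`** (the explicit part
of Lemma `lin` of Nandakumar–Yang).  The vectors `tilde` are, in 1-indexed notation,
`ẽᵢ = eᵢ + Σ_{k=1}^{n} (xᵏ)_{m+n,i} e_{m+n+k} + Σ_{l=1}^{m+n} (xˡ)_{m+2n,i} f_{n+l}` (for the
columns `i ≤ m+n`) and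
`f̃ⱼ = fⱼ + Σ_{k=1}^{n} (xᵏ)_{m+n,m+n+j} e_{m+n+k} + Σ_{l=1}^{m+n} (xˡ)_{m+2n,m+n+j} f_{n+l}`
(for the columns `m+n+j`); their span `L` is `z`-stable, `P` restricts to an isomorphism
`L ≅ W`, and `P ∘ z = x ∘ P` on `L`. -/
theorem explicit_z_stable_lift {k : Type*} [Field k] (m n : ℕ) (hn : 1 ≤ n)
    (x : Matrix (Fin (m + 2*n)) (Fin (m + 2*n)) k)
    (hx : MemS' hn x) (hnil : IsNilpotent x)
    (tilde : Fin (m + 2*n) → VV k m n)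
    (htilde : ∀ i : Fin (m + 2*n),
      tilde i = iota k m n (Pi.single i 1)
        + ∑ kk : Fin n, (x ^ ((kk : ℕ) + 1)) ⟨m + n - 1, by omega⟩ i •
            ((Pi.single (⟨m + n + (kk : ℕ), by have := kk.isLt; omega⟩ : Fin (m + 2*n)) 1, 0)
              : VV k m n)
        + ∑ ll : Fin (m + n), (x ^ ((ll : ℕ) + 1)) ⟨m + 2*n - 1, by omega⟩ i •
            ((0, Pi.single (⟨n + (ll : ℕ), by have := ll.isLt; omega⟩ : Fin (m + 2*n)) 1)
              : VV k m n))
    (L : Submodule k (VV k m n)) (hL : L = Submodule.span k (Set.range tilde)) :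
    (∀ v ∈ L, zmap k m n v ∈ L) ∧
    (∀ v ∈ L, Pmap k m n v = 0 → v = 0) ∧
    Submodule.map (Pmap k m n) L = ⊤ ∧
    ∀ v ∈ L, Pmap k m n (zmap k m n v) = x.mulVec (Pmap k m n v) := by
  have hco := aux_coord m n x tilde _ _ _ (fun _ => rfl) _ (fun _ => rfl) htilde
  set T := Fintype.linearCombination k tilde with hT
  have hLT : L = LinearMap.range T := by rw [hL, hT, Fintype.range_linearCombination]
  have hT1 : ∀ (w : Fin (m + 2*n) → k) (p : Fin (m + 2*n)), (T w).1 p =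
      if (p : ℕ) < m + n then w p
      else (x ^ ((p : ℕ) - (m + n) + 1)).mulVec w ⟨m + n - 1, by omega⟩ := by
    intro w p
    simp only [hT, Fintype.linearCombination_apply, Prod.fst_sum, Finset.sum_apply,
      Prod.smul_fst, Pi.smul_apply, (hco _ p).1]
    split_ifs with h
    · simp [Pi.single_apply]
    · simp [Matrix.mulVec, dotProduct, mul_comm]
  have hT2 : ∀ (w : Fin (m + 2*n) → k) (p : Fin (m + 2*n)), (T w).2 p =
      if h : (p : ℕ) < n then w ⟨(p : ℕ) + (m + n), by omega⟩
      else (x ^ ((p : ℕ) - n + 1)).mulVec w ⟨m + 2 * n - 1, by omega⟩ := by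
    intro w p
    simp only [hT, Fintype.linearCombination_apply, Prod.snd_sum, Finset.sum_apply,
      Prod.smul_snd, Pi.smul_apply, (hco _ p).2]
    split_ifs with h
    · simp [Pi.single_apply]
    · simp [Matrix.mulVec, dotProduct, mul_comm]
  have hPT : ∀ w, Pmap k m n (T w) = w := by
    intro w
    funext p
    have hp := p.isLt
    simp only [Pmap, LinearMap.coe_mk, AddHom.coe_mk]
    split_ifs with h
    · rw [hT1, if_pos h]
    · rw [hT2, dif_pos (by simp; omega)]
      congr 1; ext; simp; omega
  have hN := aux_pow_zero x hnil
  have hzT : ∀ w, zmap k m n (T w) = T (x.mulVec w) := by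
    intro w
    refine Prod.ext ?_ ?_
    · funext p
      have hp := p.isLt
      rw [hT1]
      simp only [zmap, LinearMap.prodMap_apply, shiftMap, LinearMap.coe_mk, AddHom.coe_mk, hT1,
        Matrix.mulVec_mulVec, ← pow_succ]
      by_cases h1 : (p : ℕ) + 1 < m + 2 * n
      · rw [dif_pos h1]
        by_cases h2 : (p : ℕ) + 1 < m + n
        · rw [if_pos h2, if_pos (by omega)]
          exact (aux_row hn x hx w p _ rfl (by simp; omega)).symm
        · rw [if_neg h2]
          by_cases h3 : (p : ℕ) < m + n
          · rw [if_pos h3]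
            have e1 : (p : ℕ) + 1 - (m + n) + 1 = 1 := by omega
            rw [e1, pow_one]
            congr 1; ext; simp; omega
          · rw [if_neg h3]
            have e1 : (p : ℕ) + 1 - (m + n) + 1 = (p : ℕ) - (m + n) + 1 + 1 := by omega
            rw [e1]
      · rw [dif_neg h1, if_neg (by omega)]
        rw [← aux_iter hn x hx (m + n - 1) ((x ^ ((p : ℕ) - (m + n) + 1 + 1)).mulVec w)
            ⟨0, by omega⟩ ⟨m + n - 1, by omega⟩ (by simp) (by simp <;> omega),
          Matrix.mulVec_mulVec, ← pow_add]
        have e1 : m + n - 1 + ((p : ℕ) - (m + n) + 1 + 1) = m + 2 * n := by omega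
        rw [e1, hN]; simp
    · funext p
      have hp := p.isLt
      rw [hT2]
      simp only [zmap, LinearMap.prodMap_apply, shiftMap, LinearMap.coe_mk, AddHom.coe_mk, hT2,
        Matrix.mulVec_mulVec, ← pow_succ]
      by_cases h1 : (p : ℕ) + 1 < m + 2 * n
      · rw [dif_pos h1]
        by_cases h2 : (p : ℕ) + 1 < n
        · rw [dif_pos h2, dif_pos (by omega)]
          exact (aux_row hn x hx w _ _ (by simp <;> omega) (by simp <;> omega)).symm
        · rw [dif_neg h2]
          by_cases h3 : (p : ℕ) < n
          · rw [dif_pos h3]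
            have e1 : (p : ℕ) + 1 - n + 1 = 1 := by omega
            rw [e1, pow_one]
            congr 1; ext; simp; omega
          · rw [dif_neg h3]
            have e1 : (p : ℕ) + 1 - n + 1 = (p : ℕ) - n + 1 + 1 := by omega
            rw [e1]
      · rw [dif_neg h1]
        by_cases h3 : (p : ℕ) < n
        · exfalso; omega
        rw [dif_neg h3]
        rw [← aux_iter hn x hx (n - 1) ((x ^ ((p : ℕ) - n + 1 + 1)).mulVec w)
            ⟨m + n, by omega⟩ ⟨m + 2 * n - 1, by omega⟩ (by simp <;> omega) (by simp),
          Matrix.mulVec_mulVec, ← pow_add]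
        have e1 : n - 1 + ((p : ℕ) - n + 1 + 1) = m + 2 * n := by omega
        rw [e1, hN]; simp
  subst hLT
  refine ⟨?_, ?_, ?_, ?_⟩
  · rintro _ ⟨w, rfl⟩
    exact ⟨x.mulVec w, (hzT w).symm⟩
  · rintro _ ⟨w, rfl⟩ h
    rw [hPT] at h
    rw [h, map_zero]
  · rw [eq_top_iff]
    intro w _
    exact ⟨T w, ⟨w, rfl⟩, hPT w⟩
  · rintro _ ⟨w, rfl⟩
    rw [hzT, hPT, hPT]
end

section
/- Let x ∈ S′_{m,n} satisfy x^{m+2n} = 0, regarded as an (m+2n)×(m+2n) matrix via the ordered basis e_1, …, e_{m+n}, f_1, …, f_n of W. Then for every 1 ≤ p ≤ m+2n one has (x^{n+1})_{m+n, p} = 0 and (x^{m+n+1})_{m+2n, p} = 0. -/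
open scoped BigOperators

theorem aux_row_s3 {k : Type*} [Field k] {m n : ℕ} (hn : 1 ≤ n)
    (x : Matrix (Fin (m + 2*n)) (Fin (m + 2*n)) k)
    (hx : MemS' hn x) (u v : Fin (m + 2*n)) (h1 : (u : ℕ) ≠ m + n - 1)
    (h2 : (u : ℕ) ≠ m + 2*n - 1) :
    x u v = if (v : ℕ) = u + 1 then 1 else 0 := by
  obtain ⟨a, c, b, d, h⟩ := hx
  have h := congrFun (h v) u
  rw [Matrix.mulVec_single_one] at h
  have e1 : u ≠ ⟨m + n - 1, by omega⟩ := fun e => h1 (by rw [e])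
  have e2 : u ≠ ⟨m + 2*n - 1, by omega⟩ := fun e => h2 (by rw [e])
  simp only [Matrix.col_apply, Pi.add_apply, Pi.smul_apply, Pi.single_eq_of_ne e1,
    Pi.single_eq_of_ne e2, smul_zero, add_zero] at h
  rw [h]
  by_cases hv : (v : ℕ) = u + 1
  · rw [if_pos (by omega), if_pos hv, Pi.single_apply, if_pos (Fin.ext (by simp; omega))]
  · rw [if_neg hv]
    split_ifs with h3
    · rw [Pi.single_apply, if_neg]
      intro e
      have := congrArg Fin.val e
      simp at this
      omega
    · rfl

theorem aux_step {k : Type*} [Field k] {m n : ℕ} (hn : 1 ≤ n)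
    (x : Matrix (Fin (m + 2*n)) (Fin (m + 2*n)) k)
    (hx : MemS' hn x) (r : ℕ) : ∀ (s : ℕ) (u w p : Fin (m + 2*n)), (w : ℕ) = u + r →
    (∀ t : ℕ, (u : ℕ) ≤ t → t < w → t ≠ m + n - 1 ∧ t ≠ m + 2*n - 1) →
    (x ^ (r + s)) u p = (x ^ s) w p := by
  induction r with
  | zero =>
    intro s u w p h _
    have : w = u := Fin.ext (by omega)
    rw [this, zero_add]
  | succ r ih =>
    intro s u w p h ht
    have hw := w.isLt
    have hu := ht u le_rfl (by omega)
    rw [show r + 1 + s = (r + s) + 1 by omega, pow_succ', Matrix.mul_apply,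
      Finset.sum_eq_single (⟨u + 1, by omega⟩ : Fin (m + 2*n))]
    · rw [aux_row_s3 hn x hx _ _ hu.1 hu.2, if_pos rfl, one_mul]
      exact ih s _ w p (by simp; omega) (fun t h1 h2 => ht t (by simp at h1; omega) h2)
    · intro v _ hv
      rw [aux_row_s3 hn x hx _ _ hu.1 hu.2, if_neg (fun e => hv (Fin.ext e)), zero_mul]
    · simp

/-- **Vanishing of the relevant rows of powers of a nilpotent `x ∈ S′_{m,n}`**: if
`x^{m+2n} = 0` then, in 1-indexed notation, `(x^{n+1})_{m+n,p} = 0` and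
`(x^{m+n+1})_{m+2n,p} = 0` for all `1 ≤ p ≤ m+2n`. -/
theorem rows_of_powers_vanish {k : Type*} [Field k] (m n : ℕ) (hn : 1 ≤ n)
    (x : Matrix (Fin (m + 2*n)) (Fin (m + 2*n)) k)
    (hx : MemS' hn x) (hnil : x ^ (m + 2*n) = 0) :
    ∀ p : Fin (m + 2*n),
      (x ^ (n + 1)) ⟨m + n - 1, by omega⟩ p = 0 ∧
      (x ^ (m + n + 1)) ⟨m + 2*n - 1, by omega⟩ p = 0 := by
  intro p
  constructor
  · rw [← aux_step hn x hx (m + n - 1) (n + 1) ⟨0, by omega⟩ _ p (by simp)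
      (fun t _ h => by simp at h; omega),
      show m + n - 1 + (n + 1) = m + 2*n by omega, hnil]
    rfl
  · rw [← aux_step hn x hx (n - 1) (m + n + 1) ⟨m + n, by omega⟩ _ p (by simp; omega)
      (fun t h' h => by simp at h h'; omega),
      show n - 1 + (m + n + 1) = m + 2*n by omega, hnil]
    rfl
end

section
/- If L ⊆ V is a subspace with dim L = m+2n, z(L) ⊆ L, and P(L) = W, then the restriction of P to L is a linear isomorphism onto W, and the endomorphism x := P ∘ z ∘ (P|_L)^{-1} of W lies in S′_{m,n} and is nilpotent. -/
open scoped BigOperators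

theorem shiftMap_pow_apply (k : Type*) [Field k] (N j : ℕ) (v : Fin N → k) (i : Fin N) :
    ((shiftMap k N) ^ j) v i = if h : (i : ℕ) + j < N then v ⟨(i : ℕ) + j, h⟩ else 0 := by
  induction j generalizing v with
  | zero => simp
  | succ j ih =>
    rw [pow_succ, Module.End.mul_apply, ih]
    by_cases h : (i : ℕ) + (j + 1) < N
    · have h1 : (i : ℕ) + j < N := by omega
      have h2 : (i : ℕ) + j + 1 < N := by omega
      simp only [h, h1, dif_pos, shiftMap, LinearMap.coe_mk, AddHom.coe_mk, h2]
      rfl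
    · have h2 : ¬ (i : ℕ) + j + 1 < N := by omega
      simp only [h, dif_neg, not_false_eq_true, shiftMap, LinearMap.coe_mk, AddHom.coe_mk, h2]
      simp

theorem zmap_pow_zero (k : Type*) [Field k] (m n : ℕ) (v : VV k m n) :
    ((zmap k m n) ^ (m + 2*n)) v = 0 := by
  have key : ∀ j : ℕ, ((zmap k m n) ^ j) v =
      (((shiftMap k (m+2*n)) ^ j) v.1, ((shiftMap k (m+2*n)) ^ j) v.2) := by
    intro j
    induction j with
    | zero => simp
    | succ j ih =>
      rw [pow_succ', Module.End.mul_apply, ih, pow_succ', Module.End.mul_apply,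
        Module.End.mul_apply]
      rfl
  rw [key]
  ext i <;> simp [shiftMap_pow_apply]

theorem Pz_apply (k : Type*) [Field k] (m n : ℕ) (v : VV k m n) (i : Fin (m + 2*n))
    (h1 : (i : ℕ) ≠ m + n - 1) (h2 : (i : ℕ) + 1 < m + 2*n) :
    Pmap k m n (zmap k m n v) i = Pmap k m n v ⟨(i : ℕ) + 1, h2⟩ := by
  by_cases h : (i : ℕ) < m + n
  · have h3 : (i : ℕ) + 1 < m + n := by omega
    simp [Pmap, zmap, shiftMap, h, h2, h3]
  · have h3 : ¬ (i : ℕ) + 1 < m + n := by omega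
    have h4 : (i : ℕ) - (m + n) + 1 < m + 2*n := by omega
    have h5 : (i : ℕ) + 1 - (m + n) = (i : ℕ) - (m + n) + 1 := by omega
    simp [Pmap, zmap, shiftMap, h, h3, h4, h5]

/-- **From a `z`-stable lift of `W` to a nilpotent element of the slice `S′_{m,n}`**: if
`L ⊆ V` has dimension `m+2n`, is `z`-stable, and `P(L) = W`, then `P|_L` is an isomorphism
onto `W`, and the endomorphism `x = P ∘ z ∘ (P|_L)⁻¹` of `W` (characterized by
`P(z v) = x(P v)` for `v ∈ L`) lies in `S′_{m,n}` and is nilpotent. -/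
theorem lift_gives_slice_element {k : Type*} [Field k] (m n : ℕ) (hn : 1 ≤ n)
    (L : Submodule k (VV k m n))
    (hdim : Module.finrank k L = m + 2*n)
    (hz : ∀ v ∈ L, zmap k m n v ∈ L)
    (hP : Submodule.map (Pmap k m n) L = ⊤) :
    (∀ v ∈ L, Pmap k m n v = 0 → v = 0) ∧
    ∃ x : Matrix (Fin (m + 2*n)) (Fin (m + 2*n)) k,
      (∀ v ∈ L, Pmap k m n (zmap k m n v) = x.mulVec (Pmap k m n v)) ∧
      MemS' hn x ∧ IsNilpotent x := by
  have hsurj : ∀ w : Wt k m n, ∃ v ∈ L, Pmap k m n v = w := by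
    intro w
    have : w ∈ Submodule.map (Pmap k m n) L := by rw [hP]; trivial
    simpa [Submodule.mem_map] using this
  let φ : L →ₗ[k] Wt k m n := (Pmap k m n).comp L.subtype
  have hφs : Function.Surjective φ := by
    intro w
    obtain ⟨v, hv, rfl⟩ := hsurj w
    exact ⟨⟨v, hv⟩, rfl⟩
  have hφi : Function.Injective φ :=
    (LinearMap.injective_iff_surjective_of_finrank_eq_finrank (by simp [hdim])).2 hφs
  let Φ : L ≃ₗ[k] Wt k m n := LinearEquiv.ofBijective φ ⟨hφi, hφs⟩
  refine ⟨?_, ?_⟩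
  · intro v hv h0
    have : (⟨v, hv⟩ : L) = 0 := hφi (by rw [map_zero]; exact h0)
    exact congrArg Subtype.val this
  let X : Wt k m n →ₗ[k] Wt k m n :=
    (Pmap k m n).comp ((zmap k m n).comp (L.subtype.comp Φ.symm.toLinearMap))
  have hX : ∀ v ∈ L, Pmap k m n (zmap k m n v) = X (Pmap k m n v) := by
    intro v hv
    have : Φ.symm (Pmap k m n v) = ⟨v, hv⟩ := by
      rw [LinearEquiv.symm_apply_eq]; rfl
    simp [X, this]
  have hmv : ∀ w, (LinearMap.toMatrix' X).mulVec w = X w := fun w => by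
    rw [LinearMap.toMatrix'_mulVec]
  refine ⟨LinearMap.toMatrix' X, ?_, ?_, ?_⟩
  · intro v hv
    rw [hmv, hX v hv]
  · refine ⟨fun j => X (Pi.single ⟨j, by omega⟩ 1) ⟨m + n - 1, by omega⟩,
      fun j => X (Pi.single ⟨j, by omega⟩ 1) ⟨m + 2*n - 1, by omega⟩,
      fun j => X (Pi.single ⟨j + (m + n), by omega⟩ 1) ⟨m + n - 1, by omega⟩,
      fun j => X (Pi.single ⟨j + (m + n), by omega⟩ 1) ⟨m + 2*n - 1, by omega⟩, ?_⟩
    intro v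
    rw [hmv]
    have e1 : ∀ t : Fin (m + 2*n), (if h : (v : ℕ) < m + n then
        X (Pi.single (⟨(v : ℕ), by omega⟩ : Fin (m + 2*n)) 1) t
        else X (Pi.single (⟨(v : ℕ) - (m + n) + (m + n), by omega⟩ : Fin (m + 2*n)) 1) t)
        = X (Pi.single v 1) t := by
      intro t
      split_ifs with h
      · rfl
      · have : (⟨(v : ℕ) - (m + n) + (m + n), by omega⟩ : Fin (m + 2*n)) = v := by
          apply Fin.ext; simp only; omega
        rw [this]
    simp only [e1]
    funext i
    have hv := v.isLt
    have hi := i.isLt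
    by_cases hi1 : (i : ℕ) = m + n - 1
    · have : i = ⟨m + n - 1, by omega⟩ := Fin.ext hi1
      rw [this]
      have hne : m + n - 1 ≠ m + 2*n - 1 := by omega
      split_ifs with hc
      · have : m + n - 1 ≠ (v : ℕ) - 1 := by omega
        simp [Pi.single_apply, hne, this]
      · simp [Pi.single_apply, hne]
    by_cases hi2 : (i : ℕ) = m + 2*n - 1
    · have : i = ⟨m + 2*n - 1, by omega⟩ := Fin.ext hi2
      rw [this]
      have hne : m + 2*n - 1 ≠ m + n - 1 := by omega
      split_ifs with hc
      · have : m + 2*n - 1 ≠ (v : ℕ) - 1 := by omega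
        simp [Pi.single_apply, hne, this]
      · simp [Pi.single_apply, hne]
    obtain ⟨u, hu, hPu⟩ := hsurj (Pi.single v 1)
    have hX1 : X (Pi.single v 1) i = (Pi.single v 1 : Wt k m n) ⟨(i : ℕ) + 1, by omega⟩ := by
      rw [← hPu, ← hX u hu, Pz_apply k m n u i hi1 (by omega)]
    simp only [Pi.add_apply, Pi.smul_apply, hX1]
    split_ifs with hc
    · have : (i : ℕ) + 1 = v ↔ (i : ℕ) = v - 1 := by omega
      simp [Pi.single_apply, Fin.ext_iff, hi1, hi2, this]
    · have : ¬ (i : ℕ) + 1 = v := by omega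
      simp [Pi.single_apply, Fin.ext_iff, hi1, hi2, this]
  · refine ⟨m + 2*n, ?_⟩
    have hpow : ∀ j : ℕ, ∀ v ∈ L, ((zmap k m n) ^ j) v ∈ L ∧
        Pmap k m n (((zmap k m n) ^ j) v) = (X ^ j) (Pmap k m n v) := by
      intro j v hv
      induction j with
      | zero => simpa using hv
      | succ j ih =>
        rw [pow_succ', Module.End.mul_apply, pow_succ', Module.End.mul_apply]
        exact ⟨hz _ ih.1, by rw [hX _ ih.1, ih.2]⟩
    have hX0 : X ^ (m + 2*n) = 0 := by
      apply LinearMap.ext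
      intro w
      obtain ⟨v, hv, rfl⟩ := hsurj w
      rw [← (hpow _ v hv).2, zmap_pow_zero]
      simp
    have := LinearMap.toMatrixAlgEquiv'.toAlgHom.map_pow X (m + 2*n)
    rw [hX0, map_zero] at this
    exact this.symm
end

section
/- Let Q_{m,n} be the set of full flags (L_1 ⊂ L_2 ⊂ ⋯ ⊂ L_{m+2n}) of subspaces of V with dim L_i = i, z(L_i) ⊆ L_{i−1} for all i (convention L_0 = 0), and P(L_{m+2n}) = W. Let F be the set of pairs (x, (V_1 ⊂ ⋯ ⊂ V_{m+2n})) where x ∈ S′_{m,n} is nilpotent and (V_i) is a full flag of subspaces of W with dim V_i = i and x(V_i) ⊆ V_{i−1} for all i. Then the map α sending (L_1, …, L_{m+2n}) ∈ Q_{m,n} to (P ∘ z ∘ (P|_{L_{m+2n}})^{-1}, (P(L_1), P(L_2), …, P(L_{m+2n}))) is a well-defined bijection from Q_{m,n} onto F. -/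
open scoped BigOperators

/-- Membership in `Q_{m,n}`: a full flag `(L₁ ⊂ ⋯ ⊂ L_{m+2n})` in `V` (0-indexed:
`Lf i = L_{i+1}`) with `dim Lᵢ = i`, `z(Lᵢ) ⊆ L_{i-1}` (and `z(L₁) = 0`), and
`P(L_{m+2n}) = W`. -/
def IsQFlag {k : Type*} [Field k] {m n : ℕ} (hn : 1 ≤ n)
    (Lf : Fin (m + 2*n) → Submodule k (VV k m n)) : Prop :=
  (∀ i : Fin (m + 2*n), Module.finrank k (Lf i) = (i : ℕ) + 1) ∧
  (∀ i j : Fin (m + 2*n), i ≤ j → Lf i ≤ Lf j) ∧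
  (∀ i : Fin (m + 2*n), ∀ v ∈ Lf i,
    if 1 ≤ (i : ℕ) then zmap k m n v ∈ Lf ⟨(i : ℕ) - 1, by have := i.isLt; omega⟩
    else zmap k m n v = 0) ∧
  Submodule.map (Pmap k m n) (Lf ⟨m + 2*n - 1, by omega⟩) = ⊤

/-- Membership in the fibre product `F`: a nilpotent `x ∈ S′_{m,n}` together with a full flag
`(V₁ ⊂ ⋯ ⊂ V_{m+2n})` in `W` (0-indexed: `Vf i = V_{i+1}`) with `dim Vᵢ = i` and
`x(Vᵢ) ⊆ V_{i-1}` (and `x(V₁) = 0`). -/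
def IsFFlag {k : Type*} [Field k] {m n : ℕ} (hn : 1 ≤ n)
    (x : Matrix (Fin (m + 2*n)) (Fin (m + 2*n)) k)
    (Vf : Fin (m + 2*n) → Submodule k (Wt k m n)) : Prop :=
  MemS' hn x ∧ IsNilpotent x ∧
  (∀ i : Fin (m + 2*n), Module.finrank k (Vf i) = (i : ℕ) + 1) ∧
  (∀ i j : Fin (m + 2*n), i ≤ j → Vf i ≤ Vf j) ∧
  (∀ i : Fin (m + 2*n), ∀ v ∈ Vf i,
    if 1 ≤ (i : ℕ) then x.mulVec v ∈ Vf ⟨(i : ℕ) - 1, by have := i.isLt; omega⟩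
    else x.mulVec v = 0)


lemma zpow_fst {k : Type*} [Field k] {m n : ℕ} (i : ℕ) (v : VV k m n) (j : Fin (m + 2*n)) :
    ((zmap k m n ^ i) v).1 j = if h : (j : ℕ) + i < m + 2*n then v.1 ⟨(j : ℕ) + i, h⟩ else 0 := by
  induction i generalizing v with
  | zero => simp
  | succ i ih =>
    rw [pow_succ, Module.End.mul_apply, ih]
    by_cases h : (j : ℕ) + i < m + 2*n
    · simp only [h, dif_pos, zmap, LinearMap.prodMap_apply, shiftMap, LinearMap.coe_mk,
        AddHom.coe_mk]
      rfl
    · have h' : ¬ ((j : ℕ) + (i + 1) < m + 2*n) := by omega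
      simp [h, h']

lemma zpow_snd {k : Type*} [Field k] {m n : ℕ} (i : ℕ) (v : VV k m n) (j : Fin (m + 2*n)) :
    ((zmap k m n ^ i) v).2 j = if h : (j : ℕ) + i < m + 2*n then v.2 ⟨(j : ℕ) + i, h⟩ else 0 := by
  induction i generalizing v with
  | zero => simp
  | succ i ih =>
    rw [pow_succ, Module.End.mul_apply, ih]
    by_cases h : (j : ℕ) + i < m + 2*n
    · simp only [h, dif_pos, zmap, LinearMap.prodMap_apply, shiftMap, LinearMap.coe_mk,
        AddHom.coe_mk]
      rfl
    · have h' : ¬ ((j : ℕ) + (i + 1) < m + 2*n) := by omega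
      simp [h, h']

lemma zmap_pow_top {k : Type*} [Field k] {m n : ℕ} (v : VV k m n) :
    (zmap k m n ^ (m + 2*n)) v = 0 := by
  refine Prod.ext ?_ ?_ <;> funext j
  · rw [zpow_fst]; simp
  · rw [zpow_snd]; simp

lemma memS'_iff {k : Type*} [Field k] {m n : ℕ} (hn : 1 ≤ n)
    (x : Matrix (Fin (m + 2*n)) (Fin (m + 2*n)) k) :
    MemS' hn x ↔ ∀ (w : Wt k m n) (r : Fin (m + 2*n)) (h : (r : ℕ) + 1 < m + 2*n),
      (r : ℕ) + 1 ≠ m + n → x.mulVec w r = w ⟨(r : ℕ) + 1, h⟩ := by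
  constructor
  · rintro ⟨a, c, b, d, H⟩ w r h hr
    have key : (LinearMap.proj r) ∘ₗ x.mulVecLin =
        (LinearMap.proj (⟨(r : ℕ) + 1, h⟩ : Fin (m + 2*n)) : Wt k m n →ₗ[k] k) := by
      refine LinearMap.pi_ext' fun v => LinearMap.ext_ring ?_
      have h1 : r ≠ ⟨m + n - 1, by omega⟩ := by
        intro e; rw [Fin.ext_iff] at e; simp at e; omega
      have h2 : r ≠ ⟨m + 2*n - 1, by omega⟩ := by
        intro e; rw [Fin.ext_iff] at e; simp at e; omega
      simp only [LinearMap.comp_apply, LinearMap.single_apply, LinearMap.proj_apply,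
        Matrix.mulVecLin_apply, H v, Pi.add_apply, Pi.smul_apply, Pi.single_eq_of_ne h1,
        Pi.single_eq_of_ne h2, smul_zero, add_zero]
      by_cases hv : (v : ℕ) = r + 1
      · have : v = ⟨(r : ℕ) + 1, h⟩ := Fin.ext hv
        subst this
        rw [if_pos ⟨by simp, hr⟩]
        simp
      · have e1 : (⟨(r : ℕ) + 1, h⟩ : Fin (m + 2*n)) ≠ v := by
          intro e; exact hv (by rw [← e])
        rw [Pi.single_eq_of_ne e1]
        split_ifs with h3
        · rw [Pi.single_eq_of_ne]
          intro e; rw [Fin.ext_iff] at e; simp at e; omega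
        · rfl
    exact LinearMap.congr_fun key w
  · intro H
    refine ⟨fun i => x ⟨m + n - 1, by omega⟩ ⟨i, by omega⟩,
      fun i => x ⟨m + 2*n - 1, by omega⟩ ⟨i, by omega⟩,
      fun j => x ⟨m + n - 1, by omega⟩ ⟨m + n + j, by omega⟩,
      fun j => x ⟨m + 2*n - 1, by omega⟩ ⟨m + n + j, by omega⟩, fun v => ?_⟩
    have hv : ∀ (h : ¬ (v : ℕ) < m + n), (⟨m + n + ((v : ℕ) - (m + n)), by omega⟩ : Fin (m + 2*n)) = v := by
      intro h; apply Fin.ext; simp; omega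
    have hd : ∀ r : Fin (m + 2*n), (if h : (v : ℕ) < m + n then x r ⟨(v : ℕ), by omega⟩
        else x r ⟨m + n + ((v : ℕ) - (m + n)), by omega⟩) = x r v := by
      intro r
      split_ifs with h
      · rfl
      · rw [hv h]
    rw [hd ⟨m + n - 1, by omega⟩, hd ⟨m + 2*n - 1, by omega⟩]
    funext r
    simp only [Pi.add_apply, Pi.smul_apply, smul_eq_mul]
    by_cases h1 : (r : ℕ) = m + n - 1
    · have e : r = ⟨m + n - 1, by omega⟩ := Fin.ext h1
      have e2 : r ≠ ⟨m + 2*n - 1, by omega⟩ := by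
        intro e; rw [Fin.ext_iff] at e; simp at e; omega
      rw [Pi.single_eq_of_ne e2, ← e, Matrix.mulVec_single_one, Pi.single_eq_same]
      split_ifs with h3
      · rw [Pi.single_eq_of_ne]
        · simp
        · intro e; rw [Fin.ext_iff] at e; simp at e; omega
      · simp
    · have e1 : r ≠ ⟨m + n - 1, by omega⟩ := by
        intro e; rw [Fin.ext_iff] at e; exact h1 e
      rw [Pi.single_eq_of_ne e1]
      by_cases h2 : (r : ℕ) = m + 2*n - 1
      · have e : r = ⟨m + 2*n - 1, by omega⟩ := Fin.ext h2
        rw [← e, Matrix.mulVec_single_one, Pi.single_eq_same]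
        split_ifs with h3
        · rw [Pi.single_eq_of_ne]
          · simp
          · intro e; rw [Fin.ext_iff] at e; simp at e; omega
        · simp
      · have e2 : r ≠ ⟨m + 2*n - 1, by omega⟩ := by
          intro e; rw [Fin.ext_iff] at e; exact h2 e
        rw [Pi.single_eq_of_ne e2, H _ r (by omega) (by omega)]
        simp only [mul_zero, add_zero]
        by_cases hv : (v : ℕ) = r + 1
        · have hlt : (r : ℕ) + 1 < m + 2*n := by omega
          obtain rfl : v = ⟨(r : ℕ) + 1, hlt⟩ := Fin.ext hv
          rw [if_pos ⟨by simp, by simp; omega⟩]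
          simp
        · have e1 : (⟨(r : ℕ) + 1, by omega⟩ : Fin (m + 2*n)) ≠ v := by
            intro e; exact hv (by rw [← e])
          rw [Pi.single_eq_of_ne e1]
          split_ifs with h3
          · rw [Pi.single_eq_of_ne]
            intro e; rw [Fin.ext_iff] at e; simp at e; omega
          · rfl

/-- The lift `W → V` attached to `x`. -/
def liftS {k : Type*} [Field k] {m n : ℕ} (hn : 1 ≤ n)
    (x : Matrix (Fin (m + 2*n)) (Fin (m + 2*n)) k) : Wt k m n →ₗ[k] VV k m n :=
  LinearMap.prod
    (LinearMap.pi fun i => LinearMap.proj (⟨0, by omega⟩ : Fin (m + 2*n)) ∘ₗ (x ^ (i : ℕ)).mulVecLin)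
    (LinearMap.pi fun i => LinearMap.proj (⟨m + n, by omega⟩ : Fin (m + 2*n)) ∘ₗ (x ^ (i : ℕ)).mulVecLin)

lemma pow_mulVec_low {k : Type*} [Field k] {m n : ℕ} (hn : 1 ≤ n)
    {x : Matrix (Fin (m + 2*n)) (Fin (m + 2*n)) k} (hx : MemS' hn x) (r : ℕ) (i : ℕ)
    (h : r + i < m + 2*n) (h2 : m + n ≤ r ∨ r + i < m + n) (w : Wt k m n) :
    (x ^ i).mulVec w ⟨r, by omega⟩ = w ⟨r + i, h⟩ := by
  rw [memS'_iff] at hx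
  induction i generalizing w with
  | zero => simp
  | succ i ih =>
    rw [pow_succ, ← Matrix.mulVec_mulVec, ih (by omega) (by omega)]
    exact hx w ⟨r + i, by omega⟩ (by simp; omega) (by simp; omega)

lemma P_liftS {k : Type*} [Field k] {m n : ℕ} (hn : 1 ≤ n)
    {x : Matrix (Fin (m + 2*n)) (Fin (m + 2*n)) k} (hx : MemS' hn x) (w : Wt k m n) :
    Pmap k m n (liftS hn x w) = w := by
  funext i
  change (if (i : ℕ) < m + n then (x ^ (i : ℕ)).mulVec w ⟨0, by omega⟩
    else (x ^ ((i : ℕ) - (m + n))).mulVec w ⟨m + n, by omega⟩) = w i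
  split_ifs with h
  · rw [pow_mulVec_low hn hx 0 i (by omega) (by omega)]
    congr 1; apply Fin.ext; simp
  · rw [pow_mulVec_low hn hx (m + n) (i - (m + n)) (by omega) (by omega)]
    congr 1; apply Fin.ext; simp; omega

lemma z_liftS {k : Type*} [Field k] {m n : ℕ} (hn : 1 ≤ n)
    {x : Matrix (Fin (m + 2*n)) (Fin (m + 2*n)) k} (hx : x ^ (m + 2*n) = 0) (w : Wt k m n) :
    zmap k m n (liftS hn x w) = liftS hn x (x.mulVec w) := by
  have key : ∀ (i r : Fin (m + 2*n)),
      (if h : (i : ℕ) + 1 < m + 2*n then (x ^ ((i : ℕ) + 1)).mulVec w r else 0)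
        = (x ^ (i : ℕ)).mulVec (x.mulVec w) r := by
    intro i r
    rw [Matrix.mulVec_mulVec, ← pow_succ]
    split_ifs with h
    · rfl
    · have : (i : ℕ) + 1 = m + 2*n := by omega
      rw [this, hx]; simp
  refine Prod.ext ?_ ?_ <;> funext i
  · exact key i _
  · exact key i _

lemma eq_liftS {k : Type*} [Field k] {m n : ℕ} (hn : 1 ≤ n)
    {x : Matrix (Fin (m + 2*n)) (Fin (m + 2*n)) k} (L : Submodule k (VV k m n))
    (hz : ∀ v ∈ L, zmap k m n v ∈ L)
    (hP : ∀ v ∈ L, Pmap k m n (zmap k m n v) = x.mulVec (Pmap k m n v)) (v : VV k m n)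
    (hv : v ∈ L) : liftS hn x (Pmap k m n v) = v := by
  have key : ∀ i, (zmap k m n ^ i) v ∈ L ∧
      Pmap k m n ((zmap k m n ^ i) v) = (x ^ i).mulVec (Pmap k m n v) := by
    intro i
    induction i with
    | zero => simpa using hv
    | succ i ih =>
      rw [pow_succ', pow_succ', Module.End.mul_apply, hP _ ih.1, ih.2, Matrix.mulVec_mulVec]
      exact ⟨hz _ ih.1, rfl⟩
  refine Prod.ext ?_ ?_ <;> funext i
  · change (x ^ (i : ℕ)).mulVec (Pmap k m n v) ⟨0, by omega⟩ = v.1 i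
    rw [← (key i).2]
    change (if _ then _ else _) = _
    rw [if_pos (by simp; omega), zpow_fst]
    simp
  · change (x ^ (i : ℕ)).mulVec (Pmap k m n v) ⟨m + n, by omega⟩ = v.2 i
    rw [← (key i).2]
    change (if _ then _ else _) = _
    rw [if_neg (by simp), zpow_snd]
    simp

lemma finrank_map_of_leftInv {k A B : Type*} [Field k] [AddCommGroup A] [AddCommGroup B]
    [Module k A] [Module k B] [FiniteDimensional k A] [FiniteDimensional k B]
    (f : A →ₗ[k] B) (g : B →ₗ[k] A)
    (U : Submodule k A) (h : ∀ v ∈ U, g (f v) = v) :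
    Module.finrank k (U.map f) = Module.finrank k U ∧ (U.map f).map g = U := by
  have e : (U.map f).map g = U := by
    ext v
    simp only [Submodule.mem_map]
    constructor
    · rintro ⟨_, ⟨u, hu, rfl⟩, rfl⟩
      rw [h u hu]; exact hu
    · intro hv
      exact ⟨_, ⟨v, hv, rfl⟩, h v hv⟩
  refine ⟨le_antisymm (Submodule.finrank_map_le f U) ?_, e⟩
  conv_lhs => rw [← e]
  exact Submodule.finrank_map_le g _

lemma IsQFlag.z_mem {k : Type*} [Field k] {m n : ℕ} {hn : 1 ≤ n}
    {Lf : Fin (m + 2*n) → Submodule k (VV k m n)} (h : IsQFlag hn Lf) (i : Fin (m + 2*n)) :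
    ∀ v ∈ Lf i, zmap k m n v ∈ Lf i := by
  intro v hv
  have h1 := h.2.2.1 i v hv
  split_ifs at h1 with h2
  · exact h.2.1 _ _ (by rw [Fin.le_def]; simp) h1
  · rw [h1]; exact zero_mem _

/-- **The isomorphism `Q_{m,n} ≅ S′_{m,n} ×_{sl} T*B`** (Lemma `sub` of Nandakumar–Yang):
the map `α` sending a flag `(L₁ ⊂ ⋯ ⊂ L_{m+2n}) ∈ Q_{m,n}` to
`(P ∘ z ∘ (P|_{L_{m+2n}})⁻¹, (P(L₁), …, P(L_{m+2n})))` is a well-defined bijection onto `F`.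
The image `α(Lf)` is characterized by: each member of the image flag is the `P`-image of the
corresponding `Lᵢ`, and `P(z v) = x (P v)` for `v ∈ L_{m+2n}`; the statement asserts that for
each point of `Q_{m,n}` there is a unique such point of `F` (well-definedness), and that each
point of `F` arises this way from a unique point of `Q_{m,n}` (bijectivity). -/
theorem Q_equiv_fibre_product {k : Type*} [Field k] (m n : ℕ) (hn : 1 ≤ n) :
    (∀ Lf : Fin (m + 2*n) → Submodule k (VV k m n), IsQFlag hn Lf →
      ∃! p : Matrix (Fin (m + 2*n)) (Fin (m + 2*n)) k ×
              (Fin (m + 2*n) → Submodule k (Wt k m n)),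
        IsFFlag hn p.1 p.2 ∧
        (∀ i, p.2 i = Submodule.map (Pmap k m n) (Lf i)) ∧
        (∀ v ∈ Lf ⟨m + 2*n - 1, by omega⟩,
          Pmap k m n (zmap k m n v) = p.1.mulVec (Pmap k m n v))) ∧
    (∀ x : Matrix (Fin (m + 2*n)) (Fin (m + 2*n)) k,
      ∀ Vf : Fin (m + 2*n) → Submodule k (Wt k m n), IsFFlag hn x Vf →
      ∃! Lf : Fin (m + 2*n) → Submodule k (VV k m n),
        IsQFlag hn Lf ∧
        (∀ i, Vf i = Submodule.map (Pmap k m n) (Lf i)) ∧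
        (∀ v ∈ Lf ⟨m + 2*n - 1, by omega⟩,
          Pmap k m n (zmap k m n v) = x.mulVec (Pmap k m n v))) := by
  constructor
  · intro Lf hL
    obtain ⟨hdim, hmono, hz, htop⟩ := id hL
    set T : Fin (m + 2*n) := ⟨m + 2*n - 1, by omega⟩ with hT
    have hle : ∀ i, Lf i ≤ Lf T := fun i => hmono i T (by rw [Fin.le_def]; simp [hT]; omega)
    let p : Lf T →ₗ[k] Wt k m n := (Pmap k m n).domRestrict (Lf T)
    have psurj : Function.Surjective p := by
      intro w
      have : w ∈ Submodule.map (Pmap k m n) (Lf T) := by rw [htop]; trivial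
      obtain ⟨v, hv, rfl⟩ := this
      exact ⟨⟨v, hv⟩, rfl⟩
    have pinj : Function.Injective p := by
      rw [LinearMap.injective_iff_surjective_of_finrank_eq_finrank]
      · exact psurj
      · rw [hdim T]; simp [hT]; omega
    let e := LinearEquiv.ofBijective p ⟨pinj, psurj⟩
    let g : Wt k m n →ₗ[k] VV k m n := (Lf T).subtype ∘ₗ e.symm.toLinearMap
    have hgP : ∀ v ∈ Lf T, g (Pmap k m n v) = v := by
      intro v hv
      have : e.symm (e ⟨v, hv⟩) = ⟨v, hv⟩ := e.symm_apply_apply _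
      exact congrArg Subtype.val this
    have hgm : ∀ w, g w ∈ Lf T := fun w => (e.symm w).2
    have hPg : ∀ w, Pmap k m n (g w) = w := fun w => e.apply_symm_apply w
    let x := LinearMap.toMatrix' (Pmap k m n ∘ₗ zmap k m n ∘ₗ g)
    have hxw : ∀ w, x.mulVec w = Pmap k m n (zmap k m n (g w)) := by
      intro w
      exact LinearMap.toMatrix'_mulVec _ w
    have hxP : ∀ v ∈ Lf T, Pmap k m n (zmap k m n v) = x.mulVec (Pmap k m n v) := by
      intro v hv
      rw [hxw, hgP v hv]
    refine ⟨(x, fun i => (Lf i).map (Pmap k m n)), ⟨⟨?_, ?_, ?_, ?_, ?_⟩, fun i => rfl, hxP⟩, ?_⟩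
    · change MemS' hn x
      rw [memS'_iff]
      intro w r h hr
      rw [hxw]
      conv_rhs => rw [← hPg w]
      simp only [Pmap, zmap, shiftMap, LinearMap.coe_mk, AddHom.coe_mk, LinearMap.prodMap_apply]
      by_cases h1 : (r : ℕ) < m + n
      · rw [if_pos h1, if_pos (by omega), dif_pos h]
      · rw [if_neg h1, if_neg (by omega), dif_pos (by omega)]
        exact congrArg (g w).2 (Fin.ext (by simp; omega))
    · change IsNilpotent x
      refine ⟨m + 2*n, ?_⟩
      have key : ∀ i v, v ∈ Lf T → (x ^ i).mulVec (Pmap k m n v) =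
          Pmap k m n ((zmap k m n ^ i) v) := by
        intro i
        induction i with
        | zero => simp
        | succ i ih =>
          intro v hv
          rw [pow_succ, pow_succ, ← Matrix.mulVec_mulVec, ← hxP v hv, ih _ (hL.z_mem T v hv)]
          rfl
      apply Matrix.ext_of_mulVec_single
      intro i
      rw [← hPg (Pi.single i 1), key _ _ (hgm _), zmap_pow_top]
      simp
    · intro i
      change Module.finrank k ((Lf i).map (Pmap k m n)) = _
      rw [(finrank_map_of_leftInv (Pmap k m n) g (Lf i) fun v hv => hgP v (hle i hv)).1, hdim]
    · intro i j hij
      exact Submodule.map_mono (hmono i j hij)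
    · rintro i _ ⟨v, hv, rfl⟩
      have h1 := hz i v hv
      change if _ then x.mulVec _ ∈ _ else x.mulVec _ = 0
      rw [← hxP v (hle i hv)]
      split_ifs at h1 ⊢ with h2
      · exact ⟨_, h1, rfl⟩
      · rw [h1, map_zero]
    · rintro ⟨y, U⟩ ⟨-, hU, hy⟩
      refine Prod.ext ?_ (funext hU)
      apply Matrix.ext_of_mulVec_single
      intro i
      have := hy (g (Pi.single i 1)) (hgm _)
      rw [hPg] at this
      change y.mulVec _ = x.mulVec _
      rw [hxw, this]
  · intro x Vf hF
    obtain ⟨hS, hnil, hdim, hmono, hxV⟩ := hF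
    have hpow : ∀ (i : ℕ) (hi : i < m + 2*n), ∀ w ∈ Vf ⟨i, hi⟩, (x ^ (i + 1)).mulVec w = 0 := by
      intro i
      induction i with
      | zero =>
        intro hi w hw
        simpa using hxV _ w hw
      | succ i ih =>
        intro hi w hw
        have h1 := hxV _ w hw
        rw [if_pos (by simp)] at h1
        rw [pow_succ, ← Matrix.mulVec_mulVec]
        exact ih (by omega) _ h1
    set T : Fin (m + 2*n) := ⟨m + 2*n - 1, by omega⟩ with hT
    have hVT : Vf T = ⊤ := by
      apply Submodule.eq_top_of_finrank_eq
      rw [hdim T]; simp [hT]; omega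
    have hxN : x ^ (m + 2*n) = 0 := by
      apply Matrix.ext_of_mulVec_single
      intro i
      have h1 := hpow (m + 2*n - 1) (by omega) (Pi.single i 1) (by
        change _ ∈ Vf T
        rw [hVT]; trivial)
      rw [Nat.sub_add_cancel (by omega)] at h1
      rw [h1, Matrix.zero_mulVec]
    have hm : ∀ i, ((Vf i).map (liftS hn x)).map (Pmap k m n) = Vf i := fun i =>
      (finrank_map_of_leftInv (liftS hn x) (Pmap k m n) (Vf i) fun v _ => P_liftS hn hS v).2
    refine ⟨fun i => (Vf i).map (liftS hn x), ⟨⟨?_, ?_, ?_, ?_⟩, ?_, ?_⟩, ?_⟩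
    · intro i
      change Module.finrank k ((Vf i).map (liftS hn x)) = _
      rw [(finrank_map_of_leftInv (liftS hn x) (Pmap k m n) (Vf i)
        fun v _ => P_liftS hn hS v).1, hdim]
    · intro i j hij
      exact Submodule.map_mono (hmono i j hij)
    · rintro i _ ⟨w, hw, rfl⟩
      have h1 := hxV i w hw
      rw [z_liftS hn hxN]
      split_ifs at h1 ⊢ with h2
      · exact ⟨_, h1, rfl⟩
      · rw [h1, map_zero]
    · exact (hm T).trans hVT
    · exact fun i => (hm i).symm
    · rintro _ ⟨w, hw, rfl⟩
      rw [z_liftS hn hxN, P_liftS hn hS, P_liftS hn hS]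
    · rintro Lf ⟨hL, hVL, hP⟩
      funext i
      have hle : Lf i ≤ Lf T := hL.2.1 i T (by rw [Fin.le_def]; simp [hT]; omega)
      rw [hVL i]
      exact ((finrank_map_of_leftInv (Pmap k m n) (liftS hn x) (Lf i) fun v hv =>
        eq_liftS hn (Lf T) (hL.z_mem T) hP v (hle hv)).2).symm
end
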